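/- Let F be a field such that there exists a ring homomorphism from ℝ to F or from the p-adic numbers ℚ_p to F for some prime p, let n ≥ 2 be an integer, and let w₁ ∈ F_{d₁}, w₂ ∈ F_{d₂} be nontrivial words. Then every element of the quotient group PSL_n(F) := SL_n(F)/Z(SL_n(F)) is a product g₁g₂ with g₁ ∈ w₁(PSL_n(F)) and g₂ ∈ w₂(PSL_n(F)). -/

import Mathlib

/-- The set of `w`-values in the group `G`: the image of the word map `w : G^d → G`. -/
def wordValues {d : ℕ} (w : FreeGroup (Fin d)) (G : Type*) [Group G] : Set G :=
  Set.range fun g : Fin d → G => FreeGroup.lift g w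

/-- `PSL_n(F) = SL_n(F) / Z(SL_n(F))`. -/
abbrev PSL (n : ℕ) (F : Type*) [Field F] :=
  Matrix.SpecialLinearGroup (Fin n) F ⧸ Subgroup.center (Matrix.SpecialLinearGroup (Fin n) F)

/-!
A word `w ≠ 1` has a value in `SL_n(K)`, `K = ℝ` or `ℚ_p`, with `n` distinct eigenvalues in `K`.
For `n = 2`, substitute into `w` matrices over `K[X]` whose leading coefficients are rank one
matrices in general position: the leading coefficient of the trace is then a product of nonzero
scalars, so the trace is a nonconstant polynomial and takes values `t` of arbitrarily large norm,
for which `X² - t X + 1` splits over `K`, by its discriminant over `ℝ` and by Hensel's lemma over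
`ℚ_p`. For larger `n`, take block diagonal matrices.

Matrices with the same distinct eigenvalues are conjugate, and `w`-values are stable under
conjugation, so every matrix with these eigenvalues is a `w`-value. It remains to use Sourour's
factorization theorem: a nonscalar invertible matrix `A` is a product of two matrices with
prescribed nonzero eigenvalues `β` and `γ`, as soon as `det A = ∏ βᵢ · ∏ γᵢ`. For this, conjugate
`A` to have the corner entry `β₀ γ₀` and a nonscalar Schur complement, and factor the Schur
complement by induction.
-/

namespace PSLWaring

open Matrix Polynomial

section WordValues

variable {d : ℕ} {G H : Type*} [Group G] [Group H] {w : FreeGroup (Fin d)}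

theorem map_mem_wordValues (f : G →* H) {g : G} (hg : g ∈ wordValues w G) :
    f g ∈ wordValues w H := by
  obtain ⟨t, rfl⟩ := hg
  have hlift : FreeGroup.lift (f ∘ t) = f.comp (FreeGroup.lift t) :=
    FreeGroup.ext_hom _ _ fun i => by simp
  exact ⟨f ∘ t, DFunLike.congr_fun hlift w⟩

theorem one_mem_wordValues : (1 : G) ∈ wordValues w G :=
  map_mem_wordValues (1 : G →* G) ⟨1, rfl⟩

theorem prodMk_mem_wordValues {g : G} {h : H} (hg : g ∈ wordValues w G)
    (hh : h ∈ wordValues w H) : (g, h) ∈ wordValues w (G × H) := by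
  obtain ⟨s, rfl⟩ := hg
  obtain ⟨t, rfl⟩ := hh
  have hlift : FreeGroup.lift (fun i => (s i, t i)) =
      (FreeGroup.lift s).prod (FreeGroup.lift t) :=
    FreeGroup.ext_hom _ _ fun i => by simp
  exact ⟨fun i => (s i, t i), DFunLike.congr_fun hlift w⟩

end WordValues

theorem exists_isCyclicallyReduced_isConj_mk {α : Type*} {w : FreeGroup α} (hw : w ≠ 1) :
    ∃ L ≠ [], FreeGroup.IsCyclicallyReduced L ∧ IsConj (FreeGroup.mk L) w := by
  classical
  have hconj : IsConj (FreeGroup.mk (FreeGroup.reduceCyclically w.toWord)) w := by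
    refine isConj_iff.mpr ⟨FreeGroup.mk (FreeGroup.reduceCyclically.conjugator w.toWord), ?_⟩
    rw [FreeGroup.inv_mk, FreeGroup.mul_mk, FreeGroup.mul_mk,
      FreeGroup.reduceCyclically.conj_conjugator_reduceCyclically, FreeGroup.mk_toWord]
  refine ⟨_, fun hnil => hw ?_,
    FreeGroup.reduceCyclically.isCyclicallyReduced FreeGroup.isReduced_toWord, hconj⟩
  rwa [hnil, ← FreeGroup.one_eq_mk, isConj_one_right] at hconj

section MatrixProducts

variable {ι n R : Type*} [Fintype n]

theorem exists_prod_map_vecMulVec_eq_smul [CommRing R] [IsDomain R] [DecidableEq n]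
    (v u : ι → n → R) (L : List ι) (i : ι)
    (hL : (i :: L).IsChain fun a b => u a ⬝ᵥ v b ≠ 0) :
    ∃ k : R, k ≠ 0 ∧ ((i :: L).map fun a => vecMulVec (v a) (u a)).prod =
      k • vecMulVec (v i) (u ((i :: L).getLast (List.cons_ne_nil i L))) := by
  induction L generalizing i with
  | nil => exact ⟨1, one_ne_zero, by simp⟩
  | cons j L ih =>
    obtain ⟨hij, hjL⟩ := List.isChain_cons_cons.mp hL
    obtain ⟨k, hk, hprod⟩ := ih j hjL
    refine ⟨k * (u i ⬝ᵥ v j), mul_ne_zero hk hij, ?_⟩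
    rw [List.map_cons, List.prod_cons, hprod, mul_smul_comm, vecMulVec_mul_vecMulVec,
      vecMulVec_smul, smul_smul, List.getLast_cons_cons]

theorem trace_prod_map_vecMulVec_ne_zero [CommRing R] [IsDomain R] [DecidableEq n]
    (v u : ι → n → R) {L : List ι} (hL : L ≠ [])
    (hchain : L.IsChain fun a b => u a ⬝ᵥ v b ≠ 0)
    (hcyc : ∀ a ∈ L.getLast?, ∀ b ∈ L.head?, u a ⬝ᵥ v b ≠ 0) :
    ((L.map fun a => vecMulVec (v a) (u a)).prod).trace ≠ 0 := by
  obtain ⟨i, L, rfl⟩ := List.exists_cons_of_ne_nil hL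
  obtain ⟨k, hk, hprod⟩ := exists_prod_map_vecMulVec_eq_smul v u L i hchain
  rw [hprod, trace_smul, trace_vecMulVec, dotProduct_comm]
  exact smul_ne_zero hk (hcyc _ (List.getLast_mem_getLast? _) i rfl)

theorem coeff_trace_prod_map_X_smul_add [CommRing R] [DecidableEq n] (P J : ι → Matrix n n R)
    (L : List ι) :
    ((L.map fun a => (X : R[X]) • (P a).map C + (J a).map C).prod).trace.coeff L.length =
      ((L.map P).prod).trace := by
  set N : ι → Matrix n n R[X] := fun a => (X : R[X]) • (P a).map C + (J a).map C
  have hN (a : ι) : matPolyEquiv (N a) = C (P a) * X + C (J a) := by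
    ext k i j
    simp [N]
  have hcoeff : (matPolyEquiv (L.map N).prod).coeff L.length = (L.map P).prod := by
    have hdeg : ∀ p ∈ L.map (matPolyEquiv ∘ N), p.natDegree ≤ 1 := by
      rintro p hp
      obtain ⟨a, -, rfl⟩ := List.mem_map.mp hp
      rw [Function.comp_apply, hN]
      exact natDegree_linear_le
    simpa [Function.comp_def, hN, map_list_prod] using coeff_list_prod_of_natDegree_le _ 1 hdeg
  simp only [← hcoeff, Matrix.trace, finsetSum_coeff, diag_apply, matPolyEquiv_coeff_apply]

end MatrixProducts

section GenericTuple

variable {α K : Type*} [Field K]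

/-- The inverse of a letter of a free group word, in the `FreeGroup` encoding of letters. -/
def invLetter (l : α × Bool) : α × Bool := (l.1, !l.2)

theorem invLetter_invLetter (l : α × Bool) : invLetter (invLetter l) = l := by simp [invLetter]

theorem invLetter_ne (l : α × Bool) : invLetter l ≠ l := by simp [invLetter, Prod.ext_iff]

variable (c : α × Bool → K)

/-- The vector attached to a letter `l` by a labelling `c` of the letters by scalars. -/
def letterVec (l : α × Bool) : Fin 2 → K := ![1, c l]

/-- The covector that is `1` on `letterVec c l` and `0` on the vector of the inverse letter. -/
def letterCovec (l : α × Bool) : Fin 2 → K :=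
  (c (invLetter l) - c l)⁻¹ • ![c (invLetter l), -1]

/-- The matrix substituted for a letter `l`. In the basis of the vectors of `l` and of its inverse
it is `!![X, 1; -1, 0]`: it has determinant `1`, and its entries have degree at most `1`. -/
noncomputable def letterMatrix (l : α × Bool) : Matrix (Fin 2) (Fin 2) K[X] :=
  (X : K[X]) • (vecMulVec (letterVec c l) (letterCovec c l)).map C +
    (vecMulVec (letterVec c l) (letterCovec c (invLetter l)) -
      vecMulVec (letterVec c (invLetter l)) (letterCovec c l)).map C

variable {c} (hc : Function.Injective c)

include hc in
theorem letterCovec_dotProduct_letterVec_ne_zero {l m : α × Bool} (h : l.1 = m.1 → l.2 = m.2) :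
    letterCovec c l ⬝ᵥ letterVec c m ≠ 0 := by
  have hlm : invLetter l ≠ m := by
    rintro rfl
    simp [invLetter] at h
  have hdot : letterCovec c l ⬝ᵥ letterVec c m =
      (c (invLetter l) - c l)⁻¹ * (c (invLetter l) - c m) := by
    rw [letterCovec, smul_dotProduct, smul_eq_mul, letterVec]
    simp [sub_eq_add_neg]
  rw [hdot]
  exact mul_ne_zero (inv_ne_zero (sub_ne_zero.mpr (hc.ne (invLetter_ne l))))
    (sub_ne_zero.mpr (hc.ne hlm))

theorem letterMatrix_eq_smul_of (l : α × Bool) :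
    letterMatrix c l = C (c (invLetter l) - c l)⁻¹ •
      !![C (c (invLetter l)) * X - (C (c l) + C (c (invLetter l))), 2 - X;
        C (c l) * C (c (invLetter l)) * X - (C (c l) ^ 2 + C (c (invLetter l)) ^ 2),
        C (c l) + C (c (invLetter l)) - C (c l) * X] := by
  have hneg : (c l - c (invLetter l))⁻¹ = -(c (invLetter l) - c l)⁻¹ := by
    rw [← neg_sub, inv_neg]
  ext i j : 1
  fin_cases i <;> fin_cases j <;>
    simp [letterMatrix, letterVec, letterCovec, invLetter_invLetter, hneg, -map_inv₀] <;> ring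

include hc in
theorem det_letterMatrix (l : α × Bool) : (letterMatrix c l).det = 1 := by
  have hinv : C (c (invLetter l) - c l)⁻¹ * (C (c (invLetter l)) - C (c l)) = 1 := by
    rw [← C_sub, ← C_mul, inv_mul_cancel₀ (sub_ne_zero.mpr (hc.ne (invLetter_ne l))), C_1]
  rw [letterMatrix_eq_smul_of, det_smul, det_fin_two_of, Fintype.card_fin]
  linear_combination (C (c (invLetter l) - c l)⁻¹ * (C (c (invLetter l)) - C (c l)) + 1) * hinv

theorem letterMatrix_invLetter (l : α × Bool) :
    letterMatrix c (invLetter l) = (letterMatrix c l).adjugate := by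
  rw [letterMatrix_eq_smul_of, letterMatrix_eq_smul_of, invLetter_invLetter, adjugate_smul,
    adjugate_fin_two_of, Fintype.card_fin, ← neg_sub, inv_neg, C_neg, neg_smul, ← smul_neg]
  congr 1
  · ring
  · ext i j : 1
    fin_cases i <;> fin_cases j <;> simp <;> ring

/-- The tuple of the matrices attached to the generators. -/
noncomputable def genericTuple (i : α) : SpecialLinearGroup (Fin 2) K[X] :=
  ⟨letterMatrix c (i, true), det_letterMatrix hc (i, true)⟩

theorem coe_lift_genericTuple_mk (L : List (α × Bool)) :
    (FreeGroup.lift (genericTuple hc) (FreeGroup.mk L)).1 = (L.map (letterMatrix c)).prod := by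
  have hletter (l : α × Bool) : (cond l.2 (genericTuple hc l.1) (genericTuple hc l.1)⁻¹).1 =
      letterMatrix c l := by
    obtain ⟨i, _ | _⟩ := l
    · exact (letterMatrix_invLetter (i, true)).symm
    · rfl
  rw [FreeGroup.lift_mk, ← Matrix.SpecialLinearGroup.coeMonoidHom_apply, map_list_prod,
    List.map_map]
  exact congrArg List.prod (List.map_congr_left fun l _ => hletter l)

include hc in
theorem zero_lt_degree_trace_lift_genericTuple {w : FreeGroup α} (hw : w ≠ 1) :
    0 < (FreeGroup.lift (genericTuple hc) w).1.trace.degree := by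
  obtain ⟨L, hL, ⟨hred, hcyc⟩, hconj⟩ := exists_isCyclicallyReduced_isConj_mk hw
  obtain ⟨u, hu⟩ := isConj_iff.mp ((FreeGroup.lift (genericTuple hc)).map_isConj hconj)
  have htrace : (FreeGroup.lift (genericTuple hc) w).1.trace =
      ((L.map (letterMatrix c)).prod).trace := by
    rw [← hu, Matrix.SpecialLinearGroup.coe_mul, Matrix.trace_mul_comm,
      ← Matrix.SpecialLinearGroup.coe_mul, inv_mul_cancel_left, coe_lift_genericTuple_mk]
  have hne : ((L.map (letterMatrix c)).prod).trace.coeff L.length ≠ 0 := by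
    have hcoeff := coeff_trace_prod_map_X_smul_add
      (fun l => vecMulVec (letterVec c l) (letterCovec c l))
      (fun l => vecMulVec (letterVec c l) (letterCovec c (invLetter l)) -
        vecMulVec (letterVec c (invLetter l)) (letterCovec c l)) L
    refine hcoeff.trans_ne (trace_prod_map_vecMulVec_ne_zero _ _ hL
      (hred.imp fun _ _ => letterCovec_dotProduct_letterVec_ne_zero hc)
      fun a ha b hb => letterCovec_dotProduct_letterVec_ne_zero hc (hcyc a ha b hb))
  rw [htrace]
  exact (Nat.cast_pos.mpr (List.length_pos_of_ne_nil hL)).trans_le (le_degree_of_ne_zero hne)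

end GenericTuple

theorem exists_mem_wordValues_zero_lt_degree_trace (K : Type*) [Field K] [Infinite K] {d : ℕ}
    {w : FreeGroup (Fin d)} (hw : w ≠ 1) :
    ∃ A ∈ wordValues w (SpecialLinearGroup (Fin 2) K[X]), 0 < A.1.trace.degree := by
  let c : Fin d × Bool ↪ K :=
    (Fintype.equivFin _).toEmbedding.trans (Fin.valEmbedding.trans (Infinite.natEmbedding K))
  exact ⟨_, ⟨genericTuple c.injective, rfl⟩, zero_lt_degree_trace_lift_genericTuple c.injective hw⟩

section Eigenvalues

variable {R F m n : Type*} [CommRing R] [Field F] [Fintype m] [DecidableEq m]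
  [Fintype n] [DecidableEq n]

/-- `β` lists the eigenvalues of `A` with multiplicity. This is encoded by the factorization of the
characteristic polynomial, so that repeated entries of `β` are allowed. -/
def HasEigenvalues (A : Matrix m m R) (β : m → R) : Prop :=
  A.charpoly = ∏ i, (X - C (β i))

theorem isConj_iff_exists_units {M : Type*} [Monoid M] {a b : M} :
    IsConj a b ↔ ∃ u : Mˣ, u * a * ↑u⁻¹ = b :=
  exists_congr fun u => u.mul_inv_eq_iff_eq_mul.symm

theorem det_eq_of_isConj {A B : Matrix m m R} (h : IsConj A B) : A.det = B.det := by
  obtain ⟨P, rfl⟩ := isConj_iff_exists_units.mp h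
  exact (det_units_conj P A).symm

namespace HasEigenvalues

variable {A : Matrix m m R} {D : Matrix n n R} {β : m → R} {δ : n → R}

theorem of_isConj {B : Matrix m m R} (hA : HasEigenvalues A β) (h : IsConj A B) :
    HasEigenvalues B β := by
  obtain ⟨P, rfl⟩ := isConj_iff_exists_units.mp h
  rwa [HasEigenvalues, coe_units_inv, charpoly_units_conj]

theorem reindex (hA : HasEigenvalues A β) (e : m ≃ n) :
    HasEigenvalues (Matrix.reindex e e A) (β ∘ e.symm) := by
  rw [HasEigenvalues, charpoly_reindex, hA]
  exact (e.symm.prod_comp fun i => X - C (β i)).symm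

theorem fromBlocks_zero₁₂ (hA : HasEigenvalues A β) (hD : HasEigenvalues D δ)
    (B : Matrix n m R) : HasEigenvalues (fromBlocks A 0 B D) (Sum.elim β δ) := by
  rw [HasEigenvalues, charpoly_fromBlocks_zero₁₂, hA, hD, Fintype.prod_sum_type]
  rfl

theorem fromBlocks_zero₂₁ (hA : HasEigenvalues A β) (hD : HasEigenvalues D δ)
    (B : Matrix m n R) : HasEigenvalues (fromBlocks A B 0 D) (Sum.elim β δ) := by
  rw [HasEigenvalues, charpoly_fromBlocks_zero₂₁, hA, hD, Fintype.prod_sum_type]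
  rfl

theorem map {S : Type*} [CommRing S] (hA : HasEigenvalues A β) (φ : R →+* S) :
    HasEigenvalues (φ.mapMatrix A) (φ ∘ β) := by
  rw [HasEigenvalues, RingHom.mapMatrix_apply, charpoly_map, hA, Polynomial.map_prod]
  simp

theorem det_eq (hA : HasEigenvalues A β) : A.det = ∏ i, β i := by
  rw [det_eq_sign_charpoly_coeff, hA, coeff_zero_prod]
  simp [Finset.prod_neg, ← mul_assoc, ← mul_pow]

theorem isConj_diagonal {A : Matrix m m F} {β : m → F} (hA : HasEigenvalues A β)
    (hβ : Function.Injective β) : IsConj A (diagonal β) := by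
  have hroot (i : m) : ∃ v, Module.End.HasEigenvector (toLin' A) (β i) v := by
    refine Module.End.HasEigenvalue.exists_hasEigenvector ?_
    rw [Module.End.hasEigenvalue_iff_isRoot_charpoly, charpoly_toLin', hA, IsRoot.def, eval_prod]
    exact Finset.prod_eq_zero (Finset.mem_univ i) (by simp)
  choose v hv using hroot
  have hunit : IsUnit (Matrix.of v)ᵀ := (isUnit_transpose _).mpr
    (linearIndependent_rows_iff_isUnit.mp (Module.End.eigenvectors_linearIndependent' _ β hβ v hv))
  obtain ⟨P, hP⟩ := hunit
  refine IsConj.symm ⟨P, ?_⟩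
  rw [SemiconjBy, hP]
  ext i j
  have hij := congrFun (hv j).apply_eq_smul i
  rw [toLin'_apply, Pi.smul_apply, smul_eq_mul] at hij
  rw [mul_diagonal, transpose_apply, of_apply, mul_comm, ← hij]
  rfl

theorem isConj {A B : Matrix m m F} {β : m → F} (hA : HasEigenvalues A β)
    (hB : HasEigenvalues B β) (hβ : Function.Injective β) : IsConj A B :=
  (hA.isConj_diagonal hβ).trans (hB.isConj_diagonal hβ).symm

end HasEigenvalues

theorem hasEigenvalues_of_unique [Unique m] (A : Matrix m m R) :
    HasEigenvalues A fun i => A i i := by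
  simp [HasEigenvalues, charpoly]

theorem hasEigenvalues_fin_two {A : Matrix (Fin 2) (Fin 2) F} (hdet : A.det = 1) {r : F}
    (hr : r ≠ 0) (htrace : A.trace = r + r⁻¹) : HasEigenvalues A ![r, r⁻¹] := by
  have hC : (C r * C r⁻¹ : F[X]) = 1 := by rw [← C_mul, mul_inv_cancel₀ hr, C_1]
  rw [HasEigenvalues, charpoly_fin_two, htrace, hdet, C_add, C_1, Fin.prod_univ_two]
  simp only [cons_val_zero, cons_val_one]
  linear_combination -hC

end Eigenvalues

section Factorization

variable {F m n : Type*} [Field F] [Fintype m] [DecidableEq m] [Fintype n] [DecidableEq n]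

theorem exists_linearEquiv_apply_eq {ι V : Type*} [AddCommGroup V] [Module F V]
    [FiniteDimensional F V] {v v' : ι → V} (hv : LinearIndependent F v)
    (hv' : LinearIndependent F v') : ∃ g : V ≃ₗ[F] V, ∀ i, g (v i) = v' i := by
  obtain ⟨g, hg⟩ := Submodule.exists_linearEquiv_restrict_eq
    (hv.linearCombinationEquiv.symm ≪≫ₗ hv'.linearCombinationEquiv)
  refine ⟨g, fun i => ?_⟩
  have hi := hg (hv.linearCombinationEquiv (Finsupp.single i 1))
  simpa using hi.symm

theorem exists_linearIndependent_mulVec {A : Matrix m m F}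
    (hA : A ∉ Set.range (Matrix.scalar m)) : ∃ v, LinearIndependent F ![v, A *ᵥ v] := by
  by_contra! hdep
  obtain ⟨a, ha⟩ := LinearMap.exists_eq_smul_id_of_forall_notLinearIndependent (f := toLin' A) hdep
  refine hA ⟨a, toLin'.injective ?_⟩
  rw [ha, scalar_apply, ← smul_one_eq_diagonal, map_smul, toLin'_one]
  rfl

theorem exists_isConj_mulVec_single {A : Matrix m m F} (hA : A ∉ Set.range (Matrix.scalar m))
    {i j : m} (hij : i ≠ j) (α : F) :
    ∃ B, IsConj A B ∧ B *ᵥ Pi.single i 1 = α • Pi.single i 1 + Pi.single j 1 := by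
  obtain ⟨v, hv⟩ := exists_linearIndependent_mulVec hA
  have hw : LinearIndependent F ![v, A *ᵥ v - α • v] := by
    rw [LinearIndependent.pair_iff] at hv ⊢
    intro s t hst
    obtain ⟨hs, rfl⟩ := hv (s - t * α) t (by rw [← hst]; module)
    exact ⟨by simpa using hs, rfl⟩
  have he : LinearIndependent F ![(Pi.single i 1 : m → F), Pi.single j 1] := by
    refine LinearIndependent.pair_iff.mpr fun s t hst => ⟨?_, ?_⟩
    · simpa [hij] using congrFun hst i
    · simpa [hij.symm] using congrFun hst j
  obtain ⟨g, hg⟩ := exists_linearEquiv_apply_eq he hw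
  have hgi : g (Pi.single i 1) = v := hg 0
  have hgj : g (Pi.single j 1) = A *ᵥ v - α • v := hg 1
  let P : (Matrix m m F)ˣ :=
    ⟨g.symm.toLinearMap.toMatrix', g.toLinearMap.toMatrix', by simp [← LinearMap.toMatrix'_comp],
      by simp [← LinearMap.toMatrix'_comp]⟩
  refine ⟨P.1 * A * P⁻¹.1, isConj_iff_exists_units.mpr ⟨P, rfl⟩, ?_⟩
  have hP (u : m → F) : P.1 *ᵥ u = g.symm u := LinearMap.toMatrix'_mulVec _ _
  have hP' (u : m → F) : P⁻¹.1 *ᵥ u = g u := LinearMap.toMatrix'_mulVec _ _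
  rw [← mulVec_mulVec, ← mulVec_mulVec, hP', hgi, hP, LinearEquiv.symm_apply_eq, map_add, map_smul,
    hgi, hgj, add_sub_cancel]

theorem exists_isConj_fromBlocks {A : Matrix (Unit ⊕ m) (Unit ⊕ m) F}
    (hA : A ∉ Set.range (Matrix.scalar (Unit ⊕ m))) (α : F) (j : m) :
    ∃ y D, IsConj A (fromBlocks (α • 1) y (Matrix.single j () 1) D) := by
  obtain ⟨B, hAB, hB⟩ := exists_isConj_mulVec_single hA (Sum.inl_ne_inr (a := ()) (b := j)) α
  refine ⟨B.toBlocks₁₂, B.toBlocks₂₂, ?_⟩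
  rw [mulVec_single_one] at hB
  convert hAB
  nth_rw 3 [← fromBlocks_toBlocks B]
  congr 1
  · ext
    simpa [toBlocks₁₁] using (congrFun hB (.inl ())).symm
  · ext i
    simpa [toBlocks₂₁, Matrix.single_apply, Pi.single_apply, eq_comm] using
      (congrFun hB (.inr i)).symm

theorem isConj_fromBlocks_of_mul_eq_zero {R : Type*} [CommRing R] (A : Matrix m m R)
    (B : Matrix m n R) (C : Matrix n m R) (D : Matrix n n R) {Z : Matrix m n R} (hZ : Z * C = 0) :
    IsConj (fromBlocks A B C D) (fromBlocks A (A * Z + B - Z * D) C (C * Z + D)) := by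
  refine ⟨⟨fromBlocks 1 (-Z) 0 1, fromBlocks 1 Z 0 1, by simp [fromBlocks_multiply],
    by simp [fromBlocks_multiply]⟩, ?_⟩
  simp only [SemiconjBy, fromBlocks_multiply, hZ, Matrix.neg_mul, Matrix.mul_neg, Matrix.one_mul,
    Matrix.mul_one, Matrix.zero_mul, Matrix.mul_zero, neg_zero, add_zero, zero_add,
    neg_add_cancel_left, fromBlocks_inj, and_self, and_true, true_and]
  abel

theorem det_fromBlocks_smul_one {α : F} (hα : α ≠ 0) (y : Matrix Unit m F)
    (x : Matrix m Unit F) (D : Matrix m m F) :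
    (fromBlocks (α • 1) y x D).det = α * (D - α⁻¹ • (x * y)).det := by
  have hLU : fromBlocks (α • 1) y x D =
      fromBlocks 1 0 (α⁻¹ • x) 1 * fromBlocks (α • 1) y 0 (D - α⁻¹ • (x * y)) := by
    simp [fromBlocks_multiply, smul_smul, hα]
  rw [hLU, det_mul, det_fromBlocks_zero₁₂, det_fromBlocks_zero₂₁]
  simp

omit [DecidableEq m] in
theorem schur_eq_of_mul_eq_zero {α : F} (hα : α ≠ 0) (y : Matrix Unit m F) (x : Matrix m Unit F)
    (D : Matrix m m F) {z : Matrix Unit m F} (hz : z * x = 0) :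
    x * z + D - α⁻¹ • (x * ((α • 1 : Matrix Unit Unit F) * z + y - z * D)) =
      (D - α⁻¹ • (x * y)) + α⁻¹ • (x * z * (D - α⁻¹ • (x * y))) := by
  have hzx (M : Matrix Unit m F) : x * z * (x * M) = 0 := by
    rw [Matrix.mul_assoc, ← Matrix.mul_assoc z, hz, Matrix.zero_mul, Matrix.mul_zero]
  simp only [Matrix.mul_add, Matrix.mul_sub, Matrix.mul_smul, Matrix.smul_mul, Matrix.one_mul, hzx,
    ← Matrix.mul_assoc, smul_add, smul_sub, inv_smul_smul₀ hα, smul_zero, sub_zero]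
  abel

theorem exists_isConj_fromBlocks_schur_notMem_range_scalar [Nonempty m]
    {A : Matrix (Unit ⊕ m) (Unit ⊕ m) F} (hA : A ∉ Set.range (Matrix.scalar (Unit ⊕ m)))
    (hdet : A.det ≠ 0) {α : F} (hα : α ≠ 0) :
    ∃ y x D, IsConj A (fromBlocks (α • 1) y x D) ∧
      (Nontrivial m → D - α⁻¹ • (x * y) ∉ Set.range (Matrix.scalar m)) := by
  obtain ⟨j⟩ := ‹Nonempty m›
  obtain ⟨y, D, hAD⟩ := exists_isConj_fromBlocks hA α j
  set x : Matrix m Unit F := Matrix.single j () 1 with hx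
  by_cases hS : Nontrivial m → D - α⁻¹ • (x * y) ∉ Set.range (Matrix.scalar m)
  · exact ⟨y, x, D, hAD, hS⟩
  push Not at hS
  obtain ⟨_, l, hl⟩ := hS
  have hl0 : l ≠ 0 := by
    rintro rfl
    rw [det_eq_of_isConj hAD, det_fromBlocks_smul_one hα, ← hl] at hdet
    simp at hdet
  -- A further conjugation adds a nonzero multiple of the matrix unit `(j, i)` to the scalar `l`.
  obtain ⟨i, hij⟩ := exists_ne j
  have hz : Matrix.single () i (1 : F) * x = 0 := by simp [hx, hij]
  refine ⟨_, x, _, hAD.trans (isConj_fromBlocks_of_mul_eq_zero _ y x D hz), ?_⟩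
  rintro - ⟨a, ha⟩
  have hji := congrFun₂ ((schur_eq_of_mul_eq_zero hα y x D hz).symm.trans ha.symm) j i
  rw [← hl] at hji
  simp [hx, hij.symm, hα, hl0] at hji

/-- `A` is the product of a matrix with eigenvalues `β` and a matrix with eigenvalues `γ`. -/
def FactorsWithEigenvalues (A : Matrix m m F) (β γ : m → F) : Prop :=
  ∃ B C, A = B * C ∧ HasEigenvalues B β ∧ HasEigenvalues C γ

namespace FactorsWithEigenvalues

variable {A : Matrix m m F} {β γ : m → F}

theorem of_isConj {A' : Matrix m m F} (h : FactorsWithEigenvalues A β γ) (hA : IsConj A A') :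
    FactorsWithEigenvalues A' β γ := by
  obtain ⟨B, C, rfl, hB, hC⟩ := h
  obtain ⟨P, rfl⟩ := isConj_iff_exists_units.mp hA
  exact ⟨_, _, by simp only [mul_assoc, Units.inv_mul_cancel_left],
    hB.of_isConj (isConj_iff_exists_units.mpr ⟨P, rfl⟩),
    hC.of_isConj (isConj_iff_exists_units.mpr ⟨P, rfl⟩)⟩

theorem reindex (h : FactorsWithEigenvalues A β γ) (e : m ≃ n) :
    FactorsWithEigenvalues (Matrix.reindex e e A) (β ∘ e.symm) (γ ∘ e.symm) := by
  obtain ⟨B, C, rfl, hB, hC⟩ := h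
  exact ⟨_, _, (submatrix_mul_equiv B C _ e.symm _).symm, hB.reindex e, hC.reindex e⟩

theorem of_subsingleton [Subsingleton m] (hdet : A.det = (∏ i, β i) * ∏ i, γ i) :
    FactorsWithEigenvalues A β γ := by
  refine ⟨diagonal β, diagonal γ, ?_, charpoly_diagonal β, charpoly_diagonal γ⟩
  ext i j
  obtain rfl := Subsingleton.elim i j
  rw [← det_eq_elem_of_subsingleton A, hdet, diagonal_mul_diagonal, diagonal_apply_eq,
    Fintype.prod_subsingleton _ i, Fintype.prod_subsingleton _ i]

theorem fromBlocks {b c : F} (hb : b ≠ 0) (hc : c ≠ 0) {y : Matrix Unit m F}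
    {x : Matrix m Unit F} {D : Matrix m m F}
    (h : FactorsWithEigenvalues (D - (b * c)⁻¹ • (x * y)) β γ) :
    FactorsWithEigenvalues (Matrix.fromBlocks ((b * c) • 1) y x D)
      (Sum.elim (fun _ => b) β) (Sum.elim (fun _ => c) γ) := by
  obtain ⟨B, C, hD, hB, hC⟩ := h
  refine ⟨Matrix.fromBlocks (b • 1) 0 (c⁻¹ • x) B, Matrix.fromBlocks (c • 1) (b⁻¹ • y) 0 C, ?_,
    HasEigenvalues.fromBlocks_zero₁₂ ?_ hB _, HasEigenvalues.fromBlocks_zero₂₁ ?_ hC _⟩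
  · rw [sub_eq_iff_eq_add'] at hD
    simp [fromBlocks_multiply, smul_smul, mul_comm b c, mul_comm b⁻¹ c⁻¹, hb, hc, hD]
  · simpa using hasEigenvalues_of_unique (b • 1 : Matrix Unit Unit F)
  · simpa using hasEigenvalues_of_unique (c • 1 : Matrix Unit Unit F)

end FactorsWithEigenvalues

theorem factorsWithEigenvalues_of_forall_schur [Nonempty m] {A : Matrix (Unit ⊕ m) (Unit ⊕ m) F}
    {β γ : Unit ⊕ m → F} (hβ : ∀ i, β i ≠ 0) (hγ : ∀ i, γ i ≠ 0)
    (hA : A ∉ Set.range (Matrix.scalar (Unit ⊕ m))) (hdet : A.det = (∏ i, β i) * ∏ i, γ i)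
    (hS : ∀ S : Matrix m m F, (Nontrivial m → S ∉ Set.range (Matrix.scalar m)) →
      S.det = (∏ i, β (.inr i)) * ∏ i, γ (.inr i) →
        FactorsWithEigenvalues S (β ∘ .inr) (γ ∘ .inr)) :
    FactorsWithEigenvalues A β γ := by
  have hbc : β (.inl ()) * γ (.inl ()) ≠ 0 := mul_ne_zero (hβ _) (hγ _)
  have hdet0 : A.det ≠ 0 := by
    rw [hdet]
    exact mul_ne_zero (Finset.prod_ne_zero_iff.mpr fun i _ => hβ i)
      (Finset.prod_ne_zero_iff.mpr fun i _ => hγ i)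
  obtain ⟨y, x, D, hconj, hscalar⟩ :=
    exists_isConj_fromBlocks_schur_notMem_range_scalar hA hdet0 hbc
  have hschur := hS _ hscalar <| mul_left_cancel₀ hbc <| by
    rw [← det_fromBlocks_smul_one hbc, ← det_eq_of_isConj hconj, hdet, Fintype.prod_sum_type,
      Fintype.prod_sum_type, Fintype.prod_unique, Fintype.prod_unique (fun i => γ (.inl i)),
      mul_mul_mul_comm]
  convert (hschur.fromBlocks (hβ _) (hγ _)).of_isConj hconj.symm using 1
  · exact (Sum.elim_comp_inl_inr β).symm
  · exact (Sum.elim_comp_inl_inr γ).symm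

theorem factorsWithEigenvalues_of_det_eq {A : Matrix m m F} {β γ : m → F} (hβ : ∀ i, β i ≠ 0)
    (hγ : ∀ i, γ i ≠ 0) (hA : Nontrivial m → A ∉ Set.range (Matrix.scalar m))
    (hdet : A.det = (∏ i, β i) * ∏ i, γ i) : FactorsWithEigenvalues A β γ := by
  induction hk : Fintype.card m generalizing m with
  | zero =>
    have := Fintype.card_eq_zero_iff.mp hk
    exact .of_subsingleton hdet
  | succ k ih =>
    obtain hm | ⟨i, j, hij⟩ := subsingleton_or_nontrivial m
    · exact .of_subsingleton hdet
    have : Nonempty {l // l ≠ i} := ⟨j, hij.symm⟩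
    let e : m ≃ Unit ⊕ {l // l ≠ i} := (Equiv.optionSubtypeNe i).symm.trans
      ((Equiv.optionEquivSumPUnit _).trans (Equiv.sumComm _ _))
    have hcard : Fintype.card {l // l ≠ i} = k := by
      rw [Fintype.card_congr e, Fintype.card_sum, Fintype.card_unit] at hk
      lia
    have hscalar : Matrix.reindex e e A ∉ Set.range (Matrix.scalar (Unit ⊕ {l // l ≠ i})) := by
      rintro ⟨a, ha⟩
      exact hA ⟨i, j, hij⟩ ⟨a, (Matrix.reindex e e).injective (by simp [← ha])⟩
    have hprod (β : m → F) : ∏ i, β (e.symm i) = ∏ i, β i := e.symm.prod_comp β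
    have hfactor : FactorsWithEigenvalues (Matrix.reindex e e A) (β ∘ e.symm) (γ ∘ e.symm) :=
      factorsWithEigenvalues_of_forall_schur (fun _ => hβ _) (fun _ => hγ _) hscalar
        (by rw [det_reindex_self, hdet, ← hprod β, ← hprod γ]; rfl)
        fun S hS hSdet => ih (fun _ => hβ _) (fun _ => hγ _) hS hSdet hcard
    simpa [Function.comp_assoc] using hfactor.reindex e.symm

end Factorization

section SpecialLinearGroup

variable {R m n p : Type*} [CommRing R] [Fintype m] [DecidableEq m]
  [Fintype n] [DecidableEq n] [Fintype p] [DecidableEq p]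

/-- Conjugation of `SL` by a matrix which is only required to be invertible. -/
def conjHom (P : (Matrix m m R)ˣ) : SpecialLinearGroup m R →* SpecialLinearGroup m R where
  toFun A := ⟨P.1 * A.1 * P⁻¹.1, (det_units_conj P A.1).trans A.2⟩
  map_one' := Subtype.ext (by simp)
  map_mul' A B := Subtype.ext <| by
    change P.1 * (A.1 * B.1) * P⁻¹.1 = P.1 * A.1 * P⁻¹.1 * (P.1 * B.1 * P⁻¹.1)
    simp only [mul_assoc, Units.inv_mul_cancel_left]

theorem mem_wordValues_of_isConj {d : ℕ} {w : FreeGroup (Fin d)} {A B : SpecialLinearGroup m R}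
    (hA : A ∈ wordValues w (SpecialLinearGroup m R)) (h : IsConj A.1 B.1) :
    B ∈ wordValues w (SpecialLinearGroup m R) := by
  obtain ⟨P, hP⟩ := isConj_iff_exists_units.mp h
  obtain rfl : conjHom P A = B := Subtype.ext hP
  exact map_mem_wordValues _ hA

/-- The block diagonal embedding of special linear groups, with blocks placed along `e`. -/
def blockDiagonalHom (e : m ⊕ n ≃ p) :
    SpecialLinearGroup m R × SpecialLinearGroup n R →* SpecialLinearGroup p R where
  toFun A := ⟨Matrix.reindex e e (fromBlocks A.1.1 0 0 A.2.1), by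
    rw [det_reindex_self, det_fromBlocks_zero₂₁, A.1.2, A.2.2, one_mul]⟩
  map_one' := Subtype.ext (by simp)
  map_mul' A B := Subtype.ext <| by
    change Matrix.reindex e e (fromBlocks (A.1.1 * B.1.1) 0 0 (A.2.1 * B.2.1)) =
      Matrix.reindex e e (fromBlocks A.1.1 0 0 A.2.1) *
        Matrix.reindex e e (fromBlocks B.1.1 0 0 B.2.1)
    simp [fromBlocks_multiply]

end SpecialLinearGroup

section SplitTraces

variable {K : Type*} [Field K]

variable (K) in
/-- The scalars `r + r⁻¹`, that is the traces of the elements of `SL₂(K)` with eigenvalues in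
`K`. -/
def splitTraces : Set K := {t | ∃ r, r ≠ 0 ∧ r + r⁻¹ = t}

variable (K) in
/-- Every nonconstant polynomial function on `K` has infinitely many values in `splitTraces K`. -/
def HitsSplitTraces : Prop :=
  ∀ f : K[X], 0 < f.degree → (Set.range (fun x => f.eval x) ∩ splitTraces K).Infinite

theorem mem_splitTraces_of_root {t r : K} (h : r * r - t * r + 1 = 0) : t ∈ splitTraces K := by
  have hr : r ≠ 0 := by
    rintro rfl
    simp at h
  refine ⟨r, hr, ?_⟩
  field_simp
  linear_combination h

theorem HitsSplitTraces.infinite (hK : HitsSplitTraces K) : Infinite K :=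
  Set.infinite_univ_iff.mp ((hK X (by simp)).mono (Set.subset_univ _))

variable {d : ℕ} {w : FreeGroup (Fin d)}

theorem exists_mem_wordValues_hasEigenvalues_fin_two (hK : HitsSplitTraces K) (hw : w ≠ 1)
    {S : Set K} (hS : S.Finite) :
    ∃ A ∈ wordValues w (SpecialLinearGroup (Fin 2) K), ∃ β : Fin 2 → K,
      Function.Injective β ∧ (∀ i, β i ∉ S) ∧ HasEigenvalues A.1 β := by
  have := hK.infinite
  obtain ⟨A, hA, hdeg⟩ := exists_mem_wordValues_zero_lt_degree_trace K hw
  obtain ⟨_, ⟨⟨x, rfl⟩, r, hr0, hr⟩, hx⟩ := (hK _ hdeg).exists_notMem_finite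
    ((hS.union (Set.toFinite {1, -1})).image fun r => r + r⁻¹)
  have hnotMem {s : K} (hs : s + s⁻¹ = r + r⁻¹) : s ∉ S ∪ {1, -1} :=
    fun hmem => hx ⟨s, hmem, hs.trans hr⟩
  have hr_notMem := hnotMem rfl
  have hr_inv_notMem := hnotMem (s := r⁻¹) (by rw [inv_inv, add_comm])
  have hne : r ≠ r⁻¹ := fun h => hr_notMem <| .inr <| mul_self_eq_one_iff.mp <| by
    nth_rw 2 [h]
    exact mul_inv_cancel₀ hr0
  refine ⟨Matrix.SpecialLinearGroup.map (evalRingHom x) A, map_mem_wordValues _ hA, ![r, r⁻¹],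
    ?_, ?_, hasEigenvalues_fin_two (Matrix.SpecialLinearGroup.det_coe _) hr0 ?_⟩
  · simpa [Function.Injective, Fin.forall_fin_two] using ⟨hne, hne.symm⟩
  · simpa [Fin.forall_fin_two] using ⟨fun h => hr_notMem (.inl h), fun h => hr_inv_notMem (.inl h)⟩
  · rw [hr]
    simp [Matrix.trace]

theorem exists_mem_wordValues_hasEigenvalues (hK : HitsSplitTraces K) (hw : w ≠ 1) (n : ℕ) :
    ∃ A ∈ wordValues w (SpecialLinearGroup (Fin n) K), ∃ β : Fin n → K,
      Function.Injective β ∧ HasEigenvalues A.1 β := by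
  induction n using Nat.twoStepInduction with
  | zero =>
    exact ⟨1, one_mem_wordValues, Fin.elim0, Function.injective_of_subsingleton _,
      by simp [HasEigenvalues]⟩
  | one =>
    exact ⟨1, one_mem_wordValues, _, Function.injective_of_subsingleton _,
      hasEigenvalues_of_unique _⟩
  | more n ih _ =>
    obtain ⟨A, hA, β, hβ, hAβ⟩ := ih
    obtain ⟨B, hB, γ, hγ, hγβ, hBγ⟩ :=
      exists_mem_wordValues_hasEigenvalues_fin_two hK hw (Set.finite_range β)
    exact ⟨blockDiagonalHom finSumFinEquiv (A, B),
      map_mem_wordValues _ (prodMk_mem_wordValues hA hB), _,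
      (hβ.sumElim hγ fun i j h => hγβ j ⟨i, h⟩).comp (Equiv.injective _),
      (hAβ.fromBlocks_zero₁₂ hBγ 0).reindex _⟩

end SplitTraces

section Products

variable {F m : Type*} [Field F] [Fintype m] [DecidableEq m]

theorem exists_mul_eq_of_hasEigenvalues {d₁ d₂ : ℕ} {w₁ : FreeGroup (Fin d₁)}
    {w₂ : FreeGroup (Fin d₂)} {A₁ A₂ : SpecialLinearGroup m F} {β₁ β₂ : m → F}
    (hA₁ : A₁ ∈ wordValues w₁ (SpecialLinearGroup m F))
    (hA₂ : A₂ ∈ wordValues w₂ (SpecialLinearGroup m F))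
    (hβ₁ : Function.Injective β₁) (hβ₂ : Function.Injective β₂)
    (h₁ : HasEigenvalues A₁.1 β₁) (h₂ : HasEigenvalues A₂.1 β₂)
    {B : SpecialLinearGroup m F} (hB : B.1 ∉ Set.range (Matrix.scalar m)) :
    ∃ B₁ ∈ wordValues w₁ (SpecialLinearGroup m F), ∃ B₂ ∈ wordValues w₂ (SpecialLinearGroup m F),
      B = B₁ * B₂ := by
  have hprod₁ : ∏ i, β₁ i = 1 := h₁.det_eq.symm.trans A₁.2
  have hprod₂ : ∏ i, β₂ i = 1 := h₂.det_eq.symm.trans A₂.2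
  obtain ⟨B₁, B₂, hmul, hB₁, hB₂⟩ := factorsWithEigenvalues_of_det_eq
    (fun i => Finset.prod_ne_zero_iff.mp (hprod₁.trans_ne one_ne_zero) i (Finset.mem_univ i))
    (fun i => Finset.prod_ne_zero_iff.mp (hprod₂.trans_ne one_ne_zero) i (Finset.mem_univ i))
    (fun _ => hB) (by rw [B.2, hprod₁, hprod₂, one_mul])
  exact ⟨⟨B₁, hB₁.det_eq.trans hprod₁⟩, mem_wordValues_of_isConj hA₁ (h₁.isConj hB₁ hβ₁),
    ⟨B₂, hB₂.det_eq.trans hprod₂⟩, mem_wordValues_of_isConj hA₂ (h₂.isConj hB₂ hβ₂),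
    Subtype.ext hmul⟩

theorem mem_center_of_mem_range_scalar {A : SpecialLinearGroup m F}
    (hA : A.1 ∈ Set.range (Matrix.scalar m)) :
    A ∈ Subgroup.center (SpecialLinearGroup m F) := by
  obtain ⟨a, ha⟩ := hA
  refine Matrix.SpecialLinearGroup.mem_center_iff.mpr ⟨a, ?_, ha⟩
  rw [← A.2, ← ha, scalar_apply, det_diagonal, Finset.prod_const, Finset.card_univ]

end Products

theorem hitsSplitTraces_of_norm {K : Type*} [NontriviallyNormedField K] {M : ℝ}
    (hK : ∀ t : K, M < ‖t‖ → t ∈ splitTraces K) : HitsSplitTraces K := by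
  intro f hf hfin
  obtain ⟨b, hb⟩ := (hfin.image norm).bddAbove
  obtain ⟨x, hx⟩ := ((f.tendsto_norm_atTop hf tendsto_norm_cobounded_atTop).eventually
    (Filter.eventually_gt_atTop (max M b))).exists
  obtain ⟨hM, hbx⟩ := max_lt_iff.mp hx
  exact hbx.not_ge (hb ⟨_, ⟨⟨x, rfl⟩, hK _ hM⟩, rfl⟩)

theorem hitsSplitTraces_real : HitsSplitTraces ℝ := by
  refine hitsSplitTraces_of_norm (M := 2) fun t ht =>
    mem_splitTraces_of_root (r := (t + √(t ^ 2 - 4)) / 2) ?_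
  have hdisc : 0 ≤ t ^ 2 - 4 := by nlinarith [sq_abs t, Real.norm_eq_abs t]
  linear_combination Real.sq_sqrt hdisc / 4

theorem hitsSplitTraces_padic (p : ℕ) [Fact p.Prime] : HitsSplitTraces ℚ_[p] := by
  refine hitsSplitTraces_of_norm (M := 1) fun t ht => ?_
  have ht0 : t ≠ 0 := norm_pos_iff.mp (one_pos.trans ht)
  have hnorm : ‖(t⁻¹) ^ 2‖ < 1 := by
    rw [norm_pow, norm_inv]
    exact pow_lt_one₀ (by positivity) (inv_lt_one_of_one_lt₀ ht) two_ne_zero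
  obtain ⟨a, ha⟩ : ∃ a : ℤ_[p], (a : ℚ_[p]) = t⁻¹ ^ 2 := ⟨⟨_, hnorm.le⟩, rfl⟩
  have hval : (X ^ 2 - X + C a : ℤ_[p][X]).aeval (1 : ℤ_[p]) = a := by simp
  have hderiv : (X ^ 2 - X + C a : ℤ_[p][X]).derivative.aeval (1 : ℤ_[p]) = 1 := by norm_num
  obtain ⟨z, hz, -⟩ := hensels_lemma (F := X ^ 2 - X + C a) (a := 1)
    (by rw [hval, hderiv]; simpa [← ha] using hnorm)
  have hroot : (z : ℚ_[p]) ^ 2 - z + t⁻¹ ^ 2 = 0 := by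
    simpa [ha] using congrArg ((↑) : ℤ_[p] → ℚ_[p]) hz
  refine mem_splitTraces_of_root (r := t * z) ?_
  linear_combination t ^ 2 * hroot - (t * t⁻¹ + 1) * mul_inv_cancel₀ ht0

end PSLWaring

open PSLWaring in
theorem psl_waring_two_general {K F : Type*} [Field K] [Field F] (hK : HitsSplitTraces K)
    (φ : K →+* F) (n : ℕ) {d₁ d₂ : ℕ} (w₁ : FreeGroup (Fin d₁)) (w₂ : FreeGroup (Fin d₂))
    (hw₁ : w₁ ≠ 1) (hw₂ : w₂ ≠ 1) :
    ∀ g : PSL n F,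
      ∃ g₁ ∈ wordValues w₁ (PSL n F), ∃ g₂ ∈ wordValues w₂ (PSL n F), g = g₁ * g₂ := by
  intro g
  obtain ⟨A, rfl⟩ := QuotientGroup.mk'_surjective _ g
  by_cases hA : A.1 ∈ Set.range (Matrix.scalar (Fin n))
  · refine ⟨1, one_mem_wordValues, 1, one_mem_wordValues, ?_⟩
    rw [mul_one, QuotientGroup.mk'_apply, QuotientGroup.eq_one_iff]
    exact mem_center_of_mem_range_scalar hA
  obtain ⟨A₁, hA₁, β₁, hβ₁, h₁⟩ := exists_mem_wordValues_hasEigenvalues hK hw₁ n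
  obtain ⟨A₂, hA₂, β₂, hβ₂, h₂⟩ := exists_mem_wordValues_hasEigenvalues hK hw₂ n
  obtain ⟨B₁, hB₁, B₂, hB₂, rfl⟩ := exists_mul_eq_of_hasEigenvalues
    (map_mem_wordValues (Matrix.SpecialLinearGroup.map φ) hA₁)
    (map_mem_wordValues (Matrix.SpecialLinearGroup.map φ) hA₂)
    (φ.injective.comp hβ₁) (φ.injective.comp hβ₂) (h₁.map φ) (h₂.map φ) hA
  exact ⟨_, map_mem_wordValues _ hB₁, _, map_mem_wordValues _ hB₂, map_mul _ B₁ B₂⟩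

/-- If `F` admits a ring homomorphism from `ℝ` or from some `ℚ_p`, `n ≥ 2`, and `w₁, w₂` are
nontrivial words, then `PSL_n(F) = w₁(PSL_n(F)) · w₂(PSL_n(F))`. -/
theorem psl_waring_two {F : Type*} [Field F]
    (hF : Nonempty (ℝ →+* F) ∨ ∃ (p : ℕ) (hp : Fact p.Prime), Nonempty (@Padic p hp →+* F))
    (n : ℕ) (hn : 2 ≤ n) {d₁ d₂ : ℕ} (w₁ : FreeGroup (Fin d₁)) (w₂ : FreeGroup (Fin d₂))
    (hw₁ : w₁ ≠ 1) (hw₂ : w₂ ≠ 1) :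
    ∀ g : PSL n F,
      ∃ g₁ ∈ wordValues w₁ (PSL n F), ∃ g₂ ∈ wordValues w₂ (PSL n F), g = g₁ * g₂ := by
  obtain ⟨⟨φ⟩⟩ | ⟨p, hp, ⟨φ⟩⟩ := hF
  · exact psl_waring_two_general PSLWaring.hitsSplitTraces_real φ n w₁ w₂ hw₁ hw₂
  · exact psl_waring_two_general (PSLWaring.hitsSplitTraces_padic p) φ n w₁ w₂ hw₁ hw₂
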